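/- (CLT for the RWG in the degenerate case p = 0.) Suppose p = 0. Then as n → ∞, (S_n − n(μ + ρ))/√n converges in distribution to the centered Gaussian law N(0, σ² + δ) on ℝ³. -/

import Mathlib

open MeasureTheory ProbabilityTheory Real Filter Set
open scoped BigOperators NNReal

noncomputable section

namespace RWG

abbrev E : Type := EuclideanSpace ℝ (Fin 3)

def vec (x y z : ℝ) : E := (EuclideanSpace.equiv (Fin 3) ℝ).symm ![x, y, z]

/-- The four families of vertices of the `2h` graphite lattice. -/
def V (a h : ℝ) (i j : Fin 2) : Set E :=
  {v | ∃ k l n : ℤ, v =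
    vec (a * ((-1 : ℝ) ^ ((i : ℕ) + 1) * (if j = 1 then (1 : ℝ) else 0) + (3 / 2) * k))
        (a * ((Real.sqrt 3 / 2) * k + Real.sqrt 3 * l))
        (h * (2 * n + (if i ≠ j then (1 : ℝ) else 0)))}

/-- Horizontal jump from a vertex of horizontal type `i` in direction `k`. -/
def w (a : ℝ) (i : Fin 2) (k : Fin 3) : E :=
  vec (a * Real.cos (2 * (k : ℕ) * π / 3 + (i : ℕ) * π))
      (a * Real.sin (2 * (k : ℕ) * π / 3 + (i : ℕ) * π)) 0

/-- `S` is a random walk on graphite with parameters `a, h, p, α, q` and natural filtration `F`. -/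
structure IsRWG {Ω : Type} [MeasurableSpace Ω] (P : Measure Ω)
    (a h p α : ℝ) (q : Fin 2 → Fin 2 → Fin 3 → ℝ)
    (S : ℕ → Ω → E) (F : ℕ → MeasurableSpace Ω) : Prop where
  prob : IsProbabilityMeasure P
  ha : 0 < a
  hh : 0 < h
  hp0 : 0 ≤ p
  hp1 : p ≤ 1
  hα0 : 0 < α
  hα1 : α < 1
  hq : ∀ i j k, 0 ≤ q i j k
  hqsum0 : ∀ i, q i 0 0 + q i 0 1 + q i 0 2 = 1 - p
  hqsum1 : ∀ i, q i 1 0 + q i 1 1 + q i 1 2 = 1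
  hS0 : ∀ ω, S 0 ω = 0
  hSmeas : ∀ n, Measurable (S n)
  hF : ∀ n, F n =
    MeasurableSpace.comap (fun ω (k : Fin n) => S ((k : ℕ) + 1) ω - S (k : ℕ) ω)
      MeasurableSpace.pi
  hTrans : ∀ (n : ℕ) (f : E → ℝ), Measurable f → (∃ C, ∀ x, |f x| ≤ C) →
    P[fun ω => f (S (n + 1) ω)|F n] =ᵐ[P]
      fun ω => ∑ i : Fin 2,
        ((V a h i 0).indicator (fun _ => (1 : ℝ)) (S n ω) *
          (α * p * f (S n ω + vec 0 0 h) + (1 - α) * p * f (S n ω + vec 0 0 (-h)) +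
            ∑ k : Fin 3, q i 0 k * f (S n ω + w a i k)) +
        (V a h i 1).indicator (fun _ => (1 : ℝ)) (S n ω) *
          ∑ k : Fin 3, q i 1 k * f (S n ω + w a i k))

def uu (q : Fin 2 → Fin 2 → Fin 3 → ℝ) (i j : Fin 2) : ℝ := q i j 1 + q i j 2

def vv (q : Fin 2 → Fin 2 → Fin 3 → ℝ) (i j : Fin 2) : ℝ := q i j 1 - q i j 2

def ss (q : Fin 2 → Fin 2 → Fin 3 → ℝ) (i j : Fin 2) : ℝ := uu q i j * (1 - uu q i j)

def tt (q : Fin 2 → Fin 2 → Fin 3 → ℝ) (i j : Fin 2) : ℝ := vv q i j * (uu q i j - 1)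

/-- The vector `μ` of the RWG. -/
def muG (a h p α : ℝ) (q : Fin 2 → Fin 2 → Fin 3 → ℝ) : E :=
  vec (3 * a / 8 * (-(uu q 0 0 + uu q 0 1) + (uu q 1 0 + uu q 1 1)))
      (a * Real.sqrt 3 / 8 * ((vv q 0 0 + vv q 0 1) - (vv q 1 0 + vv q 1 1)))
      (h * p / 2 * (2 * α - 1))

/-- The vector `m` of the RWG. -/
def mG (a h p α : ℝ) (q : Fin 2 → Fin 2 → Fin 3 → ℝ) : E :=
  vec (3 * a / 8 * (-(uu q 0 0 - uu q 0 1) + (uu q 1 0 - uu q 1 1)))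
      (a * Real.sqrt 3 / 8 * ((vv q 0 0 - vv q 0 1) - (vv q 1 0 - vv q 1 1)))
      (h * p / 2 * (2 * α - 1))

/-- The vector `θ` of the RWG. -/
def thetaG (a p : ℝ) (q : Fin 2 → Fin 2 → Fin 3 → ℝ) : E :=
  vec (a * ((1 - p / 2) - 3 / 8 * ((uu q 0 0 + uu q 0 1) + (uu q 1 0 + uu q 1 1))))
      (a * Real.sqrt 3 / 8 * ((vv q 0 0 + vv q 0 1) + (vv q 1 0 + vv q 1 1))) 0

/-- The vector `ρ` of the RWG. -/
def rhoG (a p : ℝ) (q : Fin 2 → Fin 2 → Fin 3 → ℝ) : E :=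
  vec (a * (-(p / 2) - 3 / 8 * ((uu q 0 0 - uu q 0 1) + (uu q 1 0 - uu q 1 1))))
      (a * Real.sqrt 3 / 8 * ((vv q 0 0 - vv q 0 1) + (vv q 1 0 - vv q 1 1))) 0

/-- The vector `ζ = (0, 0, hp(2α−1))`. -/
def zetaG (h p α : ℝ) : E := vec 0 0 (h * p * (2 * α - 1))

/-- The indicator process `i_n`. -/
def iP {Ω : Type} (a h : ℝ) (S : ℕ → Ω → E) (n : ℕ) (ω : Ω) : ℝ :=
  (V a h 0 0 ∪ V a h 0 1).indicator (fun _ => (1 : ℝ)) (S n ω) -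
    (V a h 1 0 ∪ V a h 1 1).indicator (fun _ => (1 : ℝ)) (S n ω)

/-- The indicator process `j_n`. -/
def jP {Ω : Type} (a h : ℝ) (S : ℕ → Ω → E) (n : ℕ) (ω : Ω) : ℝ :=
  (V a h 0 0 ∪ V a h 1 0).indicator (fun _ => (1 : ℝ)) (S n ω) -
    (V a h 0 1 ∪ V a h 1 1).indicator (fun _ => (1 : ℝ)) (S n ω)

/-- The indicator process `k_n`. -/
def kP {Ω : Type} (a h : ℝ) (S : ℕ → Ω → E) (n : ℕ) (ω : Ω) : ℝ :=
  (V a h 0 0 ∪ V a h 1 1).indicator (fun _ => (1 : ℝ)) (S n ω) -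
    (V a h 0 1 ∪ V a h 1 0).indicator (fun _ => (1 : ℝ)) (S n ω)

/-- The matrix `σ²` of the RWG. -/
def sigmaG (a h p α : ℝ) (q : Fin 2 → Fin 2 → Fin 3 → ℝ) : Matrix (Fin 3) (Fin 3) ℝ :=
  !![a ^ 2 / 4 * (2 * p * (1 - p) + 9 / 4 * (ss q 0 0 + ss q 1 0 + ss q 0 1 + ss q 1 1)
        - 3 * p * (uu q 0 0 + uu q 1 0)),
     a ^ 2 * Real.sqrt 3 / 16 * (3 * (tt q 0 0 + tt q 1 0 + tt q 0 1 + tt q 1 1)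
        + 2 * p * (vv q 0 0 + vv q 1 0)),
     a * h / 8 * (-4 * p * (1 - p) * (2 * α - 1)
        + 3 * p * (2 * α - 1) * (uu q 0 0 + uu q 1 0));
     a ^ 2 * Real.sqrt 3 / 16 * (3 * (tt q 0 0 + tt q 1 0 + tt q 0 1 + tt q 1 1)
        + 2 * p * (vv q 0 0 + vv q 1 0)),
     3 * a ^ 2 / 16 * ((uu q 0 0 + uu q 1 0 + uu q 0 1 + uu q 1 1)
        - ((vv q 0 0) ^ 2 + (vv q 1 0) ^ 2 + (vv q 0 1) ^ 2 + (vv q 1 1) ^ 2)),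
     -(a * h * Real.sqrt 3 / 8) * (p * (2 * α - 1) * (vv q 0 0 + vv q 1 0));
     a * h / 8 * (-4 * p * (1 - p) * (2 * α - 1)
        + 3 * p * (2 * α - 1) * (uu q 0 0 + uu q 1 0)),
     -(a * h * Real.sqrt 3 / 8) * (p * (2 * α - 1) * (vv q 0 0 + vv q 1 0)),
     h ^ 2 * p / 2 * (1 - p * (2 * α - 1) ^ 2)]

/-- The matrix `γ` of the RWG. -/
def gammaG (a h p α : ℝ) (q : Fin 2 → Fin 2 → Fin 3 → ℝ) : Matrix (Fin 3) (Fin 3) ℝ :=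
  !![a ^ 2 / 4 * (2 * p * (1 - p) + 9 / 4 * (ss q 0 0 + ss q 1 0 - ss q 0 1 - ss q 1 1)
        - 3 * p * (uu q 0 0 + uu q 1 0)),
     a ^ 2 * Real.sqrt 3 / 16 * (3 * (tt q 0 0 + tt q 1 0 - tt q 0 1 - tt q 1 1)
        + 2 * p * (vv q 0 0 + vv q 1 0)),
     a * h / 8 * (-4 * p * (1 - p) * (2 * α - 1)
        + 3 * p * (2 * α - 1) * (uu q 0 0 + uu q 1 0));
     a ^ 2 * Real.sqrt 3 / 16 * (3 * (tt q 0 0 + tt q 1 0 - tt q 0 1 - tt q 1 1)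
        + 2 * p * (vv q 0 0 + vv q 1 0)),
     3 * a ^ 2 / 16 * ((uu q 0 0 + uu q 1 0 - uu q 0 1 - uu q 1 1)
        - ((vv q 0 0) ^ 2 + (vv q 1 0) ^ 2 - (vv q 0 1) ^ 2 - (vv q 1 1) ^ 2)),
     -(a * h * Real.sqrt 3 / 8) * (p * (2 * α - 1) * (vv q 0 0 + vv q 1 0));
     a * h / 8 * (-4 * p * (1 - p) * (2 * α - 1)
        + 3 * p * (2 * α - 1) * (uu q 0 0 + uu q 1 0)),
     -(a * h * Real.sqrt 3 / 8) * (p * (2 * α - 1) * (vv q 0 0 + vv q 1 0)),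
     h ^ 2 * p / 2 * (1 - p * (2 * α - 1) ^ 2)]

/-- The matrix `δ` of the RWG. -/
def deltaG (a h p α : ℝ) (q : Fin 2 → Fin 2 → Fin 3 → ℝ) : Matrix (Fin 3) (Fin 3) ℝ :=
  !![a ^ 2 / 4 * (9 / 4 * (ss q 0 0 - ss q 1 0 - ss q 0 1 + ss q 1 1)
        - 3 * p * (uu q 0 0 - uu q 1 0)),
     a ^ 2 * Real.sqrt 3 / 16 * (3 * (tt q 0 0 - tt q 1 0 - tt q 0 1 + tt q 1 1)
        + 2 * p * (vv q 0 0 - vv q 1 0)),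
     a * h / 8 * (3 * p * (2 * α - 1) * (uu q 0 0 - uu q 1 0));
     a ^ 2 * Real.sqrt 3 / 16 * (3 * (tt q 0 0 - tt q 1 0 - tt q 0 1 + tt q 1 1)
        + 2 * p * (vv q 0 0 - vv q 1 0)),
     3 * a ^ 2 / 16 * ((uu q 0 0 - uu q 1 0 - uu q 0 1 + uu q 1 1)
        - ((vv q 0 0) ^ 2 - (vv q 1 0) ^ 2 - (vv q 0 1) ^ 2 + (vv q 1 1) ^ 2)),
     -(a * h * Real.sqrt 3 / 8) * (p * (2 * α - 1) * (vv q 0 0 - vv q 1 0));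
     a * h / 8 * (3 * p * (2 * α - 1) * (uu q 0 0 - uu q 1 0)),
     -(a * h * Real.sqrt 3 / 8) * (p * (2 * α - 1) * (vv q 0 0 - vv q 1 0)),
     0]

/-- A probability measure on `ℝ³` is the centered Gaussian law with covariance matrix `Γ`
if every linear functional pushes it to the corresponding one-dimensional Gaussian law. -/
def IsCenteredGaussian (G : Measure E) (Γ : Matrix (Fin 3) (Fin 3) ℝ) : Prop :=
  IsProbabilityMeasure G ∧
    ∀ u : Fin 3 → ℝ, G.map (fun x => ∑ r, u r * x r) =
      gaussianReal 0 (Real.toNNReal (∑ r, ∑ c, u r * Γ r c * u c))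

/-- View a point of `ℝ³` as a plain function on indices. -/
def toFun (x : E) : Fin 3 → ℝ := x

end RWG

namespace RWG

open Complex (I)

/-! ### Limits of powers of characteristic functions -/

lemma tendsto_of_tendsto_even_of_tendsto_odd {β : Type*} {f : ℕ → β} {l : Filter β}
    (heven : Tendsto (fun m => f (2 * m)) atTop l)
    (hodd : Tendsto (fun m => f (2 * m + 1)) atTop l) : Tendsto f atTop l := by
  intro s hs
  obtain ⟨N, hN⟩ := eventually_atTop.1 ((heven.eventually_mem hs).and (hodd.eventually_mem hs))
  refine eventually_atTop.2 ⟨2 * N, fun n hn => ?_⟩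
  obtain ⟨m, rfl | rfl⟩ := n.even_or_odd'
  · exact (hN m (by omega)).1
  · exact (hN m (by omega)).2

/-- Second order expansion of `x ↦ exp (i c x)` along a sequence `s m → 0` with `m (s m)² → κ`. -/
lemma tendsto_mul_cexp_sub_one_sub {s : ℕ → ℝ} {κ : ℝ} (hs : Tendsto s atTop (nhds 0))
    (hκ : Tendsto (fun m : ℕ => (m : ℝ) * s m ^ 2) atTop (nhds κ)) (c : ℝ) :
    Tendsto (fun m : ℕ => (m : ℂ) *
        (Complex.exp ((s m * c : ℝ) * I) - 1 - (s m * c : ℝ) * I))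
      atTop (nhds (-(κ * c ^ 2 / 2 : ℝ))) := by
  have hsc : Tendsto (fun m => |s m * c|) atTop (nhds 0) := by
    simpa using (hs.mul_const c).abs
  have hmain : Tendsto (fun m : ℕ => (-((m : ℝ) * s m ^ 2 * c ^ 2 / 2 : ℝ) : ℂ)) atTop
      (nhds (-(κ * c ^ 2 / 2 : ℝ))) :=
    ((Complex.continuous_ofReal.tendsto _).comp
      ((hκ.mul_const (c ^ 2)).div_const 2)).neg
  have hbound : Tendsto (fun m : ℕ => (m : ℝ) * s m ^ 2 * c ^ 2 * |s m * c|) atTop (nhds 0) := by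
    simpa using (hκ.mul_const (c ^ 2)).mul hsc
  have herr : Tendsto (fun m : ℕ => (m : ℂ) *
        (Complex.exp ((s m * c : ℝ) * I) - 1 - (s m * c : ℝ) * I)
          - (-((m : ℝ) * s m ^ 2 * c ^ 2 / 2 : ℝ) : ℂ)) atTop (nhds 0) := by
    refine squeeze_zero_norm' ?_ hbound
    filter_upwards [hsc.eventually (gt_mem_nhds one_pos)] with m hm
    have hn : ‖((s m * c : ℝ) : ℂ) * I‖ = |s m * c| := by
      simp only [norm_mul, Complex.norm_I, mul_one, Complex.norm_real, Real.norm_eq_abs, abs_mul]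
    have hb := Complex.exp_bound (x := ((s m * c : ℝ) : ℂ) * I) (by rw [hn]; exact hm.le)
      (n := 3) (by norm_num)
    rw [hn] at hb
    have hI : (((s m * c : ℝ) : ℂ) * I) ^ 2 = -((s m * c : ℝ) : ℂ) ^ 2 := by
      rw [mul_pow, Complex.I_sq]; ring
    have heq : (m : ℂ) * (Complex.exp ((s m * c : ℝ) * I) - 1 - (s m * c : ℝ) * I)
          - (-((m : ℝ) * s m ^ 2 * c ^ 2 / 2 : ℝ) : ℂ)
        = m * (Complex.exp ((s m * c : ℝ) * I)
          - ∑ j ∈ Finset.range 3, (((s m * c : ℝ) : ℂ) * I) ^ j / j.factorial) := by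
      simp only [Finset.sum_range_succ, Finset.sum_range_zero, hI, Nat.factorial]
      push_cast
      ring
    rw [heq, norm_mul, Complex.norm_natCast]
    have h3 : |s m * c| ^ 3 = s m ^ 2 * c ^ 2 * |s m * c| := by
      rw [pow_succ, sq_abs, mul_pow]
    calc (m : ℝ) * _ ≤ m * (|s m * c| ^ 3 * 1) := by
          gcongr
          refine hb.trans ?_
          gcongr
          norm_num [Nat.factorial]
      _ = _ := by rw [h3]; ring
  simpa using herr.add hmain

lemma tendsto_sum_cexp_pow {ι : Type*} [Fintype ι] {s : ℕ → ℝ} {κ : ℝ} {p c : ι → ℝ}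
    (hs : Tendsto s atTop (nhds 0))
    (hκ : Tendsto (fun m : ℕ => (m : ℝ) * s m ^ 2) atTop (nhds κ))
    (hp : ∑ i, p i = 1) (hc : ∑ i, p i * c i = 0) :
    Tendsto (fun m : ℕ => (∑ i, (p i : ℂ) * Complex.exp ((s m * c i : ℝ) * I)) ^ m) atTop
      (nhds (Complex.exp (-(κ * ∑ i, p i * c i ^ 2) / 2 : ℝ))) := by
  have hlim := tendsto_finsetSum Finset.univ fun i _ =>
    (tendsto_mul_cexp_sub_one_sub hs hκ (c i)).const_mul (p i : ℂ)
  have hp' : ∑ i, (p i : ℂ) = 1 := by exact_mod_cast hp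
  have hc' : ∑ i, (p i : ℂ) * c i = 0 := by exact_mod_cast hc
  have hpow := Complex.tendsto_one_add_pow_exp_of_tendsto
    (g := fun m => (∑ i, (p i : ℂ) * Complex.exp ((s m * c i : ℝ) * I)) - 1)
    (t := ((-(κ * ∑ i, p i * c i ^ 2) / 2 : ℝ) : ℂ)) ?_
  · simpa using hpow
  · convert! hlim using 2 with m
    · calc (m : ℂ) * ((∑ i, (p i : ℂ) * Complex.exp ((s m * c i : ℝ) * I)) - 1)
          = m * ((∑ i, (p i : ℂ) * Complex.exp ((s m * c i : ℝ) * I)) - ∑ i, (p i : ℂ)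
              - s m * I * ∑ i, (p i : ℂ) * c i) := by rw [hp', hc']; ring
        _ = _ := by
          rw [Finset.mul_sum _ _ ((s m : ℂ) * I), ← Finset.sum_sub_distrib,
            ← Finset.sum_sub_distrib, Finset.mul_sum]
          refine Finset.sum_congr rfl fun i _ => ?_
          push_cast
          ring
    · push_cast
      rw [neg_div, Finset.mul_sum, Finset.sum_div, ← Finset.sum_neg_distrib]
      refine Finset.sum_congr rfl fun i _ => ?_
      ring

/-! ### Centered Gaussian laws -/

lemma isCenteredGaussian_multivariateGaussian {Γ : Matrix (Fin 3) (Fin 3) ℝ}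
    (hΓ : Γ.PosSemidef) : IsCenteredGaussian (multivariateGaussian 0 Γ) Γ := by
  refine ⟨inferInstance, fun u => ?_⟩
  have hmeas : Measurable (fun x : E => ∑ r, u r * x r) := by fun_prop
  have hquad (x : Fin 3 → ℝ) : x ⬝ᵥ Γ.mulVec x = ∑ r, ∑ c, x r * Γ r c * x c := by
    simp only [dotProduct, Matrix.mulVec, Finset.mul_sum, mul_assoc]
  have hnonneg : 0 ≤ ∑ r, ∑ c, u r * Γ r c * u c := by
    rw [← hquad]
    simpa using hΓ.dotProduct_mulVec_nonneg u
  have := Measure.isProbabilityMeasure_map (μ := multivariateGaussian 0 Γ) hmeas.aemeasurable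
  refine Measure.ext_of_charFun (funext fun s => ?_)
  have hG := charFun_multivariateGaussian (μ := 0) hΓ (s • WithLp.toLp 2 u)
  rw [charFun_apply] at hG
  rw [charFun_apply, integral_map hmeas.aemeasurable (by fun_prop), charFun_gaussianReal,
    Real.coe_toNNReal _ hnonneg]
  convert! hG using 2
  · ext x
    congr 3
    simp [PiLp.inner_apply, Fin.sum_univ_three]
    ring
  · rw [hquad]
    simp [Fin.sum_univ_three]
    ring

/-! ### The lattice -/

lemma vec_apply (x y z : ℝ) (r : Fin 3) : vec x y z r = ![x, y, z] r := rfl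

lemma vec_add (x y z x' y' z' : ℝ) : vec x y z + vec x' y' z' = vec (x + x') (y + y') (z + z') := by
  ext r
  fin_cases r <;> simp [vec_apply]

lemma cos_two_pi_div_three : Real.cos (2 * π / 3) = -(1 / 2) := by
  rw [show 2 * π / 3 = π - π / 3 by ring, Real.cos_pi_sub, Real.cos_pi_div_three]

lemma sin_two_pi_div_three : Real.sin (2 * π / 3) = √3 / 2 := by
  rw [show 2 * π / 3 = π - π / 3 by ring, Real.sin_pi_sub, Real.sin_pi_div_three]

lemma cos_four_pi_div_three : Real.cos (2 * 2 * π / 3) = -(1 / 2) := by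
  rw [show 2 * 2 * π / 3 = π / 3 + π by ring, Real.cos_add_pi, Real.cos_pi_div_three]

lemma sin_four_pi_div_three : Real.sin (2 * 2 * π / 3) = -(√3 / 2) := by
  rw [show 2 * 2 * π / 3 = π / 3 + π by ring, Real.sin_add_pi, Real.sin_pi_div_three]

lemma w_zero (a : ℝ) (k : Fin 3) :
    w a 0 k = vec (![a, -(a / 2), -(a / 2)] k) (![0, a * √3 / 2, -(a * √3 / 2)] k) 0 := by
  fin_cases k <;>
    simp [w, cos_two_pi_div_three, sin_two_pi_div_three, cos_four_pi_div_three,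
      sin_four_pi_div_three] <;> ring_nf

lemma w_one (a : ℝ) (k : Fin 3) :
    w a 1 k = vec (-(![a, -(a / 2), -(a / 2)] k)) (-(![0, a * √3 / 2, -(a * √3 / 2)] k)) 0 := by
  fin_cases k <;>
    simp [w, Real.cos_add_pi, Real.sin_add_pi, cos_two_pi_div_three, sin_two_pi_div_three,
      cos_four_pi_div_three, sin_four_pi_div_three] <;> ring_nf

lemma vec_inj {x y z x' y' z' : ℝ} : vec x y z = vec x' y' z' ↔ x = x' ∧ y = y' ∧ z = z' := by
  refine ⟨fun h => ⟨congrArg (· 0) h, congrArg (· 1) h, congrArg (· 2) h⟩, ?_⟩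
  rintro ⟨rfl, rfl, rfl⟩
  rfl

lemma zero_mem_V (a h : ℝ) : (0 : E) ∈ V a h 0 0 := by
  refine ⟨0, 0, 0, ?_⟩
  ext r
  fin_cases r <;> simp [vec_apply]

lemma add_w_zero_mem_V {a h : ℝ} {x : E} (hx : x ∈ V a h 0 0) (k : Fin 3) :
    x + w a 0 k ∈ V a h 1 1 := by
  obtain ⟨j, l, n, rfl⟩ := hx
  refine ⟨![j, j - 1, j - 1] k, ![l, l + 1, l] k, n, ?_⟩
  rw [w_zero, vec_add, vec_inj]
  fin_cases k <;> refine ⟨?_, ?_, ?_⟩ <;> simp <;> ring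

lemma add_w_one_mem_V {a h : ℝ} {x : E} (hx : x ∈ V a h 1 1) (k : Fin 3) :
    x + w a 1 k ∈ V a h 0 0 := by
  obtain ⟨j, l, n, rfl⟩ := hx
  refine ⟨![j, j + 1, j + 1] k, ![l, l - 1, l] k, n, ?_⟩
  rw [w_one, vec_add, vec_inj]
  fin_cases k <;> refine ⟨?_, ?_, ?_⟩ <;> simp <;> ring

lemma measurableSet_V (a h : ℝ) (i j : Fin 2) : MeasurableSet (V a h i j) := by
  refine Set.Countable.measurableSet ((Set.countable_range (fun m : ℤ × ℤ × ℤ =>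
    vec (a * ((-1 : ℝ) ^ ((i : ℕ) + 1) * (if j = 1 then (1 : ℝ) else 0) + (3 / 2) * m.1))
        (a * ((Real.sqrt 3 / 2) * m.1 + Real.sqrt 3 * m.2.1))
        (h * (2 * m.2.2 + (if i ≠ j then (1 : ℝ) else 0))))).mono ?_)
  rintro x ⟨k, l, n, rfl⟩
  exact ⟨(k, l, n), rfl⟩

/-- Vertices of the two layers at even and odd height are different. -/
lemma notMem_V_of_mem_V_self {a h : ℝ} (hh : 0 < h) {i i' j' : Fin 2} {x : E}
    (hx : x ∈ V a h i i) (hne : i' ≠ j') : x ∉ V a h i' j' := by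
  rintro ⟨k', l', n', h'⟩
  obtain ⟨k, l, n, rfl⟩ := hx
  have hz := mul_left_cancel₀ hh.ne' (vec_inj.1 h').2.2
  simp only [ne_eq, not_true_eq_false, if_false, hne, not_false_eq_true, if_true] at hz
  have : 2 * n + 0 = 2 * n' + 1 := by exact_mod_cast hz
  omega

lemma notMem_V_one_of_mem_V_zero {a h : ℝ} (ha : 0 < a) {x : E} (hx : x ∈ V a h 0 0) :
    x ∉ V a h 1 1 := by
  rintro ⟨k', l', n', h'⟩
  obtain ⟨k, l, n, rfl⟩ := hx
  have hz := mul_left_cancel₀ ha.ne' (vec_inj.1 h').1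
  norm_num at hz
  have : 3 * k = 2 + 3 * k' := by
    have : (3 : ℝ) * k = 2 + 3 * k' := by linarith
    exact_mod_cast this
  omega

/-- A vertex of type `(i, i)` has no other type. -/
lemma indicator_V_of_mem_V_self {a h : ℝ} (ha : 0 < a) (hh : 0 < h) {i : Fin 2} {x : E}
    (hx : x ∈ V a h i i) (i' j' : Fin 2) :
    (V a h i' j').indicator (fun _ => (1 : ℝ)) x = if i' = i ∧ j' = i then 1 else 0 := by
  by_cases hij : i' = j'
  · subst hij
    by_cases hi : i' = i
    · subst hi
      simp [hx]
    · have : x ∉ V a h i' i' := by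
        intro hx'
        fin_cases i <;> fin_cases i' <;> simp at hi
        · exact notMem_V_one_of_mem_V_zero ha hx hx'
        · exact notMem_V_one_of_mem_V_zero ha hx' hx
      simp [this, hi]
  · have : ¬ (i' = i ∧ j' = i) := fun hc => hij (hc.1.trans hc.2.symm)
    simp [notMem_V_of_mem_V_self hh hx hij, this]

/-! ### The law of the walk without vertical jumps -/

section Walk

variable {Ω : Type} [MeasurableSpace Ω] {P : Measure Ω} {a h α : ℝ}
  {q : Fin 2 → Fin 2 → Fin 3 → ℝ} {S : ℕ → Ω → E} {F : ℕ → MeasurableSpace Ω}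

lemma IsRWG.le_measurableSpace {p : ℝ} (hRW : IsRWG P a h p α q S F) (n : ℕ) :
    F n ≤ ‹MeasurableSpace Ω› := by
  rw [hRW.hF n]
  exact Measurable.comap_le (measurable_pi_lambda _ fun k =>
    (hRW.hSmeas _).sub (hRW.hSmeas _))

lemma IsRWG.sum_q {p : ℝ} (hRW : IsRWG P a h p α q S F) (hp : p = 0) (i j : Fin 2) :
    ∑ k, q i j k = 1 := by
  rw [Fin.sum_univ_three]
  fin_cases j
  · simpa [hp] using hRW.hqsum0 i
  · exact hRW.hqsum1 i

lemma IsRWG.integral_succ (hRW : IsRWG P a h 0 α q S F) {n : ℕ} {i : Fin 2}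
    (hn : ∀ᵐ ω ∂P, S n ω ∈ V a h i i) {f : E → ℝ} (hf : Measurable f)
    (hfb : ∃ C, ∀ x, |f x| ≤ C) :
    ∫ ω, f (S (n + 1) ω) ∂P = ∫ ω, ∑ k, q i i k * f (S n ω + w a i k) ∂P := by
  have := hRW.prob
  rw [← integral_condExp (hRW.le_measurableSpace n), integral_congr_ae (hRW.hTrans n f hf hfb)]
  refine integral_congr_ae ?_
  filter_upwards [hn] with ω hω
  simp only [indicator_V_of_mem_V_self hRW.ha hRW.hh hω, Fin.sum_univ_two]
  fin_cases i <;> simp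

lemma IsRWG.integral_succ_complex (hRW : IsRWG P a h 0 α q S F) {n : ℕ} {i : Fin 2}
    (hn : ∀ᵐ ω ∂P, S n ω ∈ V a h i i) {f : E → ℂ} (hf : Measurable f) {C : ℝ}
    (hfb : ∀ x, ‖f x‖ ≤ C) :
    ∫ ω, f (S (n + 1) ω) ∂P = ∫ ω, ∑ k, (q i i k : ℂ) * f (S n ω + w a i k) ∂P := by
  have := hRW.prob
  have hS := hRW.hSmeas
  have hint (m : ℕ) (v : E) : Integrable (fun ω => f (S m ω + v)) P :=
    .of_bound (hf.comp ((hS m).add_const v)).aestronglyMeasurable C (.of_forall fun _ => hfb _)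
  have hint' : Integrable (fun ω => f (S (n + 1) ω)) P := by simpa using hint (n + 1) 0
  have hsum : Integrable (fun ω => ∑ k, (q i i k : ℂ) * f (S n ω + w a i k)) P :=
    integrable_finsetSum _ fun k _ => (hint n _).const_mul _
  apply Complex.ext
  · rw [← Complex.reCLM_apply, ← Complex.reCLM_apply, ← Complex.reCLM.integral_comp_comm hint',
      ← Complex.reCLM.integral_comp_comm hsum]
    simpa using hRW.integral_succ hn (f := fun x => (f x).re) (by fun_prop)
      ⟨C, fun x => (Complex.abs_re_le_norm _).trans (hfb x)⟩
  · rw [← Complex.imCLM_apply, ← Complex.imCLM_apply, ← Complex.imCLM.integral_comp_comm hint',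
      ← Complex.imCLM.integral_comp_comm hsum]
    simpa using hRW.integral_succ hn (f := fun x => (f x).im) (by fun_prop)
      ⟨C, fun x => (Complex.abs_im_le_norm _).trans (hfb x)⟩

lemma IsRWG.ae_mem_succ (hRW : IsRWG P a h 0 α q S F) {n : ℕ} {i i' : Fin 2}
    (hstep : ∀ x ∈ V a h i i, ∀ k, x + w a i k ∈ V a h i' i')
    (hn : ∀ᵐ ω ∂P, S n ω ∈ V a h i i) : ∀ᵐ ω ∂P, S (n + 1) ω ∈ V a h i' i' := by
  have := hRW.prob
  have hV := measurableSet_V a h i' i'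
  have hint := hRW.integral_succ hn (f := (V a h i' i').indicator fun _ => (1 : ℝ))
    (measurable_const.indicator hV) ⟨1, fun x => by
      by_cases hx : x ∈ V a h i' i' <;> simp [hx]⟩
  have hone : ∫ ω, ∑ k, q i i k * (V a h i' i').indicator (fun _ => (1 : ℝ)) (S n ω + w a i k) ∂P
      = ∫ _, (1 : ℝ) ∂P := by
    refine integral_congr_ae ?_
    filter_upwards [hn] with ω hω
    simp [hstep _ hω, hRW.sum_q rfl]
  have hset : MeasurableSet (S (n + 1) ⁻¹' V a h i' i') := hRW.hSmeas _ hV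
  rw [hone, integral_const, probReal_univ, one_smul] at hint
  have hreal : P.real (S (n + 1) ⁻¹' V a h i' i') = 1 := by
    rw [← hint, ← integral_indicator_one hset]
    rfl
  exact (mem_ae_iff_prob_eq_one hset).2 ((ENNReal.toReal_eq_one_iff _).1 hreal)

lemma IsRWG.ae_mem (hRW : IsRWG P a h 0 α q S F) (m : ℕ) :
    (∀ᵐ ω ∂P, S (2 * m) ω ∈ V a h 0 0) ∧ ∀ᵐ ω ∂P, S (2 * m + 1) ω ∈ V a h 1 1 := by
  have hodd (n : ℕ) : (∀ᵐ ω ∂P, S n ω ∈ V a h 0 0) → ∀ᵐ ω ∂P, S (n + 1) ω ∈ V a h 1 1 :=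
    hRW.ae_mem_succ fun x hx => add_w_zero_mem_V hx
  have heven : ∀ᵐ ω ∂P, S (2 * m) ω ∈ V a h 0 0 := by
    induction m with
    | zero => exact .of_forall fun ω => by simpa [hRW.hS0 ω] using zero_mem_V a h
    | succ m ih => exact hRW.ae_mem_succ (fun x hx => add_w_one_mem_V hx) (hodd _ ih)
  exact ⟨heven, hodd _ heven⟩

/-- Characteristic function of a horizontal jump from a vertex of type `(i, i)`. -/
def jumpChar (a : ℝ) (q : Fin 2 → Fin 2 → Fin 3 → ℝ) (i : Fin 2) (t : E) : ℂ :=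
  ∑ k, (q i i k : ℂ) * Complex.exp ((inner ℝ (w a i k) t : ℝ) * I)

lemma IsRWG.integral_cexp_succ (hRW : IsRWG P a h 0 α q S F) {n : ℕ} {i : Fin 2}
    (hn : ∀ᵐ ω ∂P, S n ω ∈ V a h i i) (t : E) :
    ∫ ω, Complex.exp ((inner ℝ (S (n + 1) ω) t : ℝ) * I) ∂P
      = (∫ ω, Complex.exp ((inner ℝ (S n ω) t : ℝ) * I) ∂P) * jumpChar a q i t := by
  rw [hRW.integral_succ_complex hn (f := fun x => Complex.exp ((inner ℝ x t : ℝ) * I))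
    (by fun_prop) (C := 1) (fun x => (Complex.norm_exp_ofReal_mul_I _).le),
    ← integral_mul_const]
  congr with ω
  rw [jumpChar, Finset.mul_sum]
  refine Finset.sum_congr rfl fun k _ => ?_
  rw [inner_add_left, Complex.ofReal_add, add_mul, Complex.exp_add]
  ring

lemma IsRWG.integral_cexp_even (hRW : IsRWG P a h 0 α q S F) (m : ℕ) (t : E) :
    ∫ ω, Complex.exp ((inner ℝ (S (2 * m) ω) t : ℝ) * I) ∂P
      = (jumpChar a q 0 t * jumpChar a q 1 t) ^ m := by
  have := hRW.prob
  induction m with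
  | zero => simp [hRW.hS0]
  | succ m ih =>
    rw [show 2 * (m + 1) = 2 * m + 1 + 1 by ring, hRW.integral_cexp_succ (hRW.ae_mem m).2,
      hRW.integral_cexp_succ (hRW.ae_mem m).1, ih]
    ring

lemma IsRWG.integral_cexp_odd (hRW : IsRWG P a h 0 α q S F) (m : ℕ) (t : E) :
    ∫ ω, Complex.exp ((inner ℝ (S (2 * m + 1) ω) t : ℝ) * I) ∂P
      = (jumpChar a q 0 t * jumpChar a q 1 t) ^ m * jumpChar a q 0 t := by
  rw [hRW.integral_cexp_succ (hRW.ae_mem m).1, hRW.integral_cexp_even]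

end Walk

/-! ### Two consecutive jumps -/

/-- Weight of a jump in direction `k.1` from type `(0, 0)` followed by one in direction `k.2` from
type `(1, 1)`. -/
def pairWeight (q : Fin 2 → Fin 2 → Fin 3 → ℝ) (k : Fin 3 × Fin 3) : ℝ := q 0 0 k.1 * q 1 1 k.2

/-- The component along `t` of two consecutive jumps with each jump shifted by `-ν`. -/
def pairJump (a : ℝ) (ν t : E) (k : Fin 3 × Fin 3) : ℝ :=
  inner ℝ (w a 0 k.1 + w a 1 k.2 - (2 : ℝ) • ν) t

section Moments

variable {a h α : ℝ} {q : Fin 2 → Fin 2 → Fin 3 → ℝ}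

lemma sum_pairWeight (h0 : ∑ k, q 0 0 k = 1) (h1 : ∑ k, q 1 1 k = 1) :
    ∑ k, pairWeight q k = 1 := by
  simp only [pairWeight, Fintype.sum_prod_type, ← Finset.mul_sum, h1, mul_one, h0]

lemma sum_pairWeight_mul_pairJump (h0 : ∑ k, q 0 0 k = 1) (h1 : ∑ k, q 1 1 k = 1) (t : E) :
    ∑ k, pairWeight q k * pairJump a (muG a h 0 α q + rhoG a 0 q) t k = 0 := by
  rw [Fin.sum_univ_three] at h0 h1
  have e0 : q 0 0 0 = 1 - q 0 0 1 - q 0 0 2 := by linarith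
  have e1 : q 1 1 0 = 1 - q 1 1 1 - q 1 1 2 := by linarith
  simp [pairWeight, pairJump, Fintype.sum_prod_type, Fin.sum_univ_three, w_zero, w_one,
    PiLp.inner_apply, vec_apply, muG, rhoG, uu, vv, e0, e1]
  ring

lemma sum_pairWeight_mul_pairJump_sq (h0 : ∑ k, q 0 0 k = 1) (h1 : ∑ k, q 1 1 k = 1) (t : E) :
    ∑ k, pairWeight q k * pairJump a (muG a h 0 α q + rhoG a 0 q) t k ^ 2
      = 2 * (t.ofLp ⬝ᵥ (sigmaG a h 0 α q + deltaG a h 0 α q).mulVec t.ofLp) := by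
  rw [Fin.sum_univ_three] at h0 h1
  have e0 : q 0 0 0 = 1 - q 0 0 1 - q 0 0 2 := by linarith
  have e1 : q 1 1 0 = 1 - q 1 1 1 - q 1 1 2 := by linarith
  have h3 : √3 ^ 2 = (3 : ℝ) := Real.sq_sqrt (by norm_num)
  simp [pairWeight, pairJump, Fintype.sum_prod_type, Fin.sum_univ_three, w_zero, w_one,
    PiLp.inner_apply, vec_apply, muG, rhoG, e0, e1, dotProduct, Matrix.mulVec, sigmaG, deltaG, ss,
    tt, uu, vv]
  linear_combination (a ^ 2 / 4 * (q 0 0 1 + q 0 0 2 - (q 0 0 1 - q 0 0 2) ^ 2 + q 1 1 1 + q 1 1 2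
    - (q 1 1 1 - q 1 1 2) ^ 2) * t 1 ^ 2) * h3

lemma posSemidef_sigmaG_add_deltaG (hq : ∀ i j k, 0 ≤ q i j k) (h0 : ∑ k, q 0 0 k = 1)
    (h1 : ∑ k, q 1 1 k = 1) : (sigmaG a h 0 α q + deltaG a h 0 α q).PosSemidef := by
  refine Matrix.PosSemidef.of_dotProduct_mulVec_nonneg ?_ fun x => ?_
  · ext r c
    fin_cases r <;> fin_cases c <;> simp [sigmaG, deltaG]
  · have hsq := sum_pairWeight_mul_pairJump_sq (a := a) (h := h) (α := α) h0 h1 (WithLp.toLp 2 x)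
    have hnonneg : 0 ≤ ∑ k, pairWeight q k *
        pairJump a (muG a h 0 α q + rhoG a 0 q) (WithLp.toLp 2 x) k ^ 2 :=
      Finset.sum_nonneg fun k _ => mul_nonneg (mul_nonneg (hq _ _ _) (hq _ _ _)) (sq_nonneg _)
    rw [hsq] at hnonneg
    simpa using hnonneg

lemma cexp_mul_jumpChar_mul_jumpChar (ν t : E) (s : ℝ) :
    Complex.exp (-(2 * s * inner ℝ ν t : ℝ) * I) * (jumpChar a q 0 (s • t) * jumpChar a q 1 (s • t))
      = ∑ k, (pairWeight q k : ℂ) * Complex.exp ((s * pairJump a ν t k : ℝ) * I) := by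
  rw [jumpChar, jumpChar, Finset.sum_mul_sum, Fintype.sum_prod_type, Finset.mul_sum]
  refine Finset.sum_congr rfl fun k _ => ?_
  rw [Finset.mul_sum]
  refine Finset.sum_congr rfl fun l _ => ?_
  have : ((s * pairJump a ν t (k, l) : ℝ) : ℂ) * I = -(2 * s * inner ℝ ν t : ℝ) * I
      + (inner ℝ (w a 0 k) (s • t) : ℝ) * I + (inner ℝ (w a 1 l) (s • t) : ℝ) * I := by
    simp only [pairJump, inner_sub_left, inner_add_left, real_inner_smul_left,
      real_inner_smul_right]
    push_cast
    ring
  rw [this, Complex.exp_add, Complex.exp_add, pairWeight]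
  push_cast
  ring

lemma tendsto_cexp_mul_jumpChar (h0 : ∑ k, q 0 0 k = 1) (ν t : E) {s : ℕ → ℝ}
    (hs : Tendsto s atTop (nhds 0)) :
    Tendsto (fun m => Complex.exp (-(s m * inner ℝ ν t : ℝ) * I) * jumpChar a q 0 (s m • t))
      atTop (nhds 1) := by
  have hcont : Continuous fun x : ℝ =>
      Complex.exp (-(x * inner ℝ ν t : ℝ) * I) * jumpChar a q 0 (x • t) := by
    unfold jumpChar
    fun_prop
  have hq : ∑ k, (q 0 0 k : ℂ) = 1 := by exact_mod_cast h0
  have hlim := (hcont.tendsto 0).comp hs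
  simpa [jumpChar, hq, Function.comp_def] using hlim

end Moments

/-! ### Convergence in distribution -/

lemma tendsto_inv_sqrt_natCast : Tendsto (fun n : ℕ => (√(n : ℝ))⁻¹) atTop (nhds 0) :=
  tendsto_inv_atTop_zero.comp (Real.tendsto_sqrt_atTop.comp tendsto_natCast_atTop_atTop)

section Convergence

variable {Ω : Type} [MeasurableSpace Ω] {P : Measure Ω} {a h α : ℝ}
  {q : Fin 2 → Fin 2 → Fin 3 → ℝ} {S : ℕ → Ω → E} {F : ℕ → MeasurableSpace Ω}

/-- The rescaled walk. -/
def rescaled (S : ℕ → Ω → E) (ν : E) (n : ℕ) (ω : Ω) : E := (√(n : ℝ))⁻¹ • (S n ω - (n : ℝ) • ν)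

lemma measurable_rescaled (hS : ∀ n, Measurable (S n)) (ν : E) (n : ℕ) :
    Measurable (rescaled S ν n) := by
  have := hS n
  unfold rescaled
  fun_prop

lemma charFun_map_rescaled (hS : ∀ n, Measurable (S n)) (ν t : E) (n : ℕ) :
    charFun (P.map (rescaled S ν n)) t
      = Complex.exp (-(n * ((√(n : ℝ))⁻¹ * inner ℝ ν t) : ℝ) * I) *
        ∫ ω, Complex.exp ((inner ℝ (S n ω) ((√(n : ℝ))⁻¹ • t) : ℝ) * I) ∂P := by
  rw [charFun_apply, integral_map (measurable_rescaled hS ν n).aemeasurable (by fun_prop),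
    ← integral_const_mul]
  congr with ω
  rw [← Complex.exp_add, rescaled, real_inner_smul_left, inner_sub_left, real_inner_smul_left,
    real_inner_smul_right]
  push_cast
  ring_nf

lemma IsRWG.charFun_map_rescaled_even (hRW : IsRWG P a h 0 α q S F) (ν t : E) (m : ℕ) :
    charFun (P.map (rescaled S ν (2 * m))) t
      = (∑ k, (pairWeight q k : ℂ) *
          Complex.exp (((√((2 * m : ℕ) : ℝ))⁻¹ * pairJump a ν t k : ℝ) * I)) ^ m := by
  rw [charFun_map_rescaled hRW.hSmeas, hRW.integral_cexp_even, ← cexp_mul_jumpChar_mul_jumpChar,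
    mul_pow (Complex.exp _), ← Complex.exp_nat_mul]
  congr 2
  push_cast
  ring

lemma IsRWG.charFun_map_rescaled_odd (hRW : IsRWG P a h 0 α q S F) (ν t : E) (m : ℕ) :
    charFun (P.map (rescaled S ν (2 * m + 1))) t
      = (∑ k, (pairWeight q k : ℂ) *
          Complex.exp (((√((2 * m + 1 : ℕ) : ℝ))⁻¹ * pairJump a ν t k : ℝ) * I)) ^ m *
        (Complex.exp (-((√((2 * m + 1 : ℕ) : ℝ))⁻¹ * inner ℝ ν t : ℝ) * I) *
          jumpChar a q 0 ((√((2 * m + 1 : ℕ) : ℝ))⁻¹ • t)) := by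
  rw [charFun_map_rescaled hRW.hSmeas, hRW.integral_cexp_odd, ← cexp_mul_jumpChar_mul_jumpChar,
    mul_pow (Complex.exp _), ← Complex.exp_nat_mul]
  generalize (√((2 * m + 1 : ℕ) : ℝ))⁻¹ = s
  have : -(((2 * m + 1 : ℕ) : ℝ) * (s * inner ℝ ν t) : ℝ) * I
      = m * (-(2 * s * inner ℝ ν t : ℝ) * I) + -(s * inner ℝ ν t : ℝ) * I := by
    push_cast
    ring
  rw [this, Complex.exp_add]
  ring

lemma IsRWG.tendsto_charFun_map_rescaled (hRW : IsRWG P a h 0 α q S F) (t : E) :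
    Tendsto (fun n => charFun (P.map (rescaled S (muG a h 0 α q + rhoG a 0 q) n)) t) atTop
      (nhds (charFun (multivariateGaussian 0 (sigmaG a h 0 α q + deltaG a h 0 α q)) t)) := by
  have h0 := hRW.sum_q rfl 0 0
  have h1 := hRW.sum_q rfl 1 1
  have hpow {φ : ℕ → ℕ} (hφ : Tendsto φ atTop atTop)
      (hκ : Tendsto (fun m : ℕ => (m : ℝ) * ((√(φ m : ℝ))⁻¹) ^ 2) atTop (nhds (1 / 2))) :=
    tendsto_sum_cexp_pow (tendsto_inv_sqrt_natCast.comp hφ) hκ (sum_pairWeight h0 h1)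
      (sum_pairWeight_mul_pairJump (a := a) (h := h) (α := α) h0 h1 t)
  have hlim : charFun (multivariateGaussian 0 (sigmaG a h 0 α q + deltaG a h 0 α q)) t
      = Complex.exp (-(1 / 2 * ∑ k, pairWeight q k *
          pairJump a (muG a h 0 α q + rhoG a 0 q) t k ^ 2) / 2 : ℝ) := by
    rw [charFun_multivariateGaussian (posSemidef_sigmaG_add_deltaG hRW.hq h0 h1),
      sum_pairWeight_mul_pairJump_sq h0 h1]
    congr 1
    simp
    ring
  rw [hlim]
  have hφ : Tendsto (fun m : ℕ => 2 * m) atTop atTop := 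
    tendsto_id.const_mul_atTop' two_pos
  have hφ' : Tendsto (fun m : ℕ => 2 * m + 1) atTop atTop := 
    (tendsto_add_atTop_nat 1).comp hφ
  have hinv : Tendsto (fun m : ℕ => (1 / 2 : ℝ) - 1 / 2 * (((2 * m + 1 : ℕ) : ℝ))⁻¹) atTop
      (nhds (1 / 2)) := by
    simpa [-one_div] using ((tendsto_inv_atTop_zero.comp
      (tendsto_natCast_atTop_atTop.comp hφ')).const_mul (1 / 2 : ℝ)).const_sub (1 / 2)
  refine tendsto_of_tendsto_even_of_tendsto_odd ?_ ?_
  · simp_rw [hRW.charFun_map_rescaled_even]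
    refine hpow hφ (tendsto_const_nhds.congr' ?_)
    filter_upwards [eventually_gt_atTop 0] with m hm
    rw [inv_pow, Real.sq_sqrt (Nat.cast_nonneg _)]
    push_cast
    field_simp
  · simp_rw [hRW.charFun_map_rescaled_odd]
    rw [← mul_one (Complex.exp _)]
    refine (hpow hφ' (hinv.congr fun m => ?_)).mul
      (tendsto_cexp_mul_jumpChar h0 _ t (tendsto_inv_sqrt_natCast.comp hφ'))
    rw [inv_pow, Real.sq_sqrt (Nat.cast_nonneg _)]
    push_cast
    field_simp
    ring

end Convergence

end RWG

theorem rwg_clt_p_zero {Ω : Type} [MeasurableSpace Ω] (P : Measure Ω)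
    (a h p α : ℝ) (q : Fin 2 → Fin 2 → Fin 3 → ℝ)
    (S : ℕ → Ω → RWG.E) (F : ℕ → MeasurableSpace Ω)
    (hRW : RWG.IsRWG P a h p α q S F) (hp : p = 0) :
    ∃ G : Measure RWG.E,
      RWG.IsCenteredGaussian G (RWG.sigmaG a h p α q + RWG.deltaG a h p α q) ∧
      ∀ f : RWG.E → ℝ, Continuous f → (∃ C, ∀ x, |f x| ≤ C) →
        Tendsto
          (fun n : ℕ => ∫ ω, f ((Real.sqrt n)⁻¹ •
            (S n ω - (n : ℝ) • (RWG.muG a h p α q + RWG.rhoG a p q))) ∂P)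
          atTop (nhds (∫ x, f x ∂G)) := by
  subst hp
  have := hRW.prob
  have hΓ := RWG.posSemidef_sigmaG_add_deltaG (a := a) (h := h) (α := α) hRW.hq
    (hRW.sum_q rfl 0 0) (hRW.sum_q rfl 1 1)
  refine ⟨_, RWG.isCenteredGaussian_multivariateGaussian hΓ, fun f hf ⟨C, hC⟩ => ?_⟩
  have hX := RWG.measurable_rescaled hRW.hSmeas (RWG.muG a h 0 α q + RWG.rhoG a 0 q)
  let law (n : ℕ) : ProbabilityMeasure RWG.E :=
    ⟨P.map (RWG.rescaled S (RWG.muG a h 0 α q + RWG.rhoG a 0 q) n),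
      Measure.isProbabilityMeasure_map (hX n).aemeasurable⟩
  let G : ProbabilityMeasure RWG.E :=
    ⟨multivariateGaussian 0 (RWG.sigmaG a h 0 α q + RWG.deltaG a h 0 α q), inferInstance⟩
  have hlaw : Tendsto law atTop (nhds G) :=
    ProbabilityMeasure.tendsto_of_tendsto_charFun hRW.tendsto_charFun_map_rescaled
  have hint := ProbabilityMeasure.tendsto_iff_forall_integral_tendsto.1 hlaw
    (BoundedContinuousFunction.ofNormedAddCommGroup f hf C hC)
  refine hint.congr fun n => ?_
  exact integral_map (hX n).aemeasurable hf.aestronglyMeasurable
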